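/- arXiv:1411.3173 — 3 statements merged into one kernel-verified Lean document; each statement's English description precedes it below -/
import Mathlib

section
/- Let Y be a topological space with a regular Gδ-diagonal, (X_t)_{t∈T} a family of nonempty topological spaces, X = ∏_{t∈T} X_t, a ∈ X, and let E ⊆ X be a set which, with the subspace topology, is pseudo-ℵ₁-compact and which is (ℵ₁,ℵ₀)-invariant with respect to a. Then for every continuous mapping f : E → Y there exist an at most countable set T₀ ⊆ T and a continuous mapping f₀ : p_{T₀}(E) → Y such that f = f₀ ∘ (p_{T₀}|_E). In particular, f depends on countably many coordinates. -/
/-!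
For a coordinate `t` let `resetCoord t x` be `x` with its `t`-th coordinate replaced by `a t`.
By invariance under cofinite sets this is a continuous self-map of `E`. Let `T₀` be the set of all
`t` for which `f x ≠ f (resetCoord t x)` for some `x ∈ E`.

`T₀` is countable: with `(G n)` witnessing the regular `Gδ`-diagonal, `T₀` is the union over `n` of
the sets of `t` such that the open set `{x | (f x, f (resetCoord t x)) ∉ closure (G n)}` is nonempty.
For fixed `n` these open sets form a locally finite family
(`locallyFinite_reset`): near a point `x`, continuity gives a basic neighbourhood `O` with
`f(O) × f(O) ⊆ G n`, and `O` restricts only finitely many coordinates, so for every other `t` it is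
stable under `resetCoord t` and misses the `t`-th set. Pseudo-ℵ₁-compactness bounds the
number of indices.

Outside `T₀` finitely many coordinates of `x` can be reset without changing `f x`; the
resulting net converges to the point `x'` that agrees with `x` on `T₀` and with `a` elsewhere. This
point lies in `E` because `T₀` is countable, and `Y` is Hausdorff, so `f x = f x'`. Since `x'`
is a continuous function of the projection of `x` to `T₀`, this gives the factorization.
-/

open Set Topology

/-- A topological space is pseudo-ℵ₁-compact if every locally finite family of
(pairwise distinct) nonempty open subsets is at most countable. -/
def PseudoAleph1Compact (Z : Type*) [TopologicalSpace Z] : Prop :=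
  ∀ 𝒰 : Set (Set Z), (∀ U ∈ 𝒰, IsOpen U) → (∀ U ∈ 𝒰, U.Nonempty) →
    LocallyFinite (fun U : 𝒰 => (U : Set Z)) → 𝒰.Countable

/-- `A` is functionally closed in `Z` if it is the zero set of a continuous real function. -/
def FunctionallyClosed {Z : Type*} [TopologicalSpace Z] (A : Set Z) : Prop :=
  ∃ f : Z → ℝ, Continuous f ∧ A = f ⁻¹' {0}

/-- `A` is functionally open in `Z` if its complement is functionally closed. -/
def FunctionallyOpen {Z : Type*} [TopologicalSpace Z] (A : Set Z) : Prop :=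
  FunctionallyClosed Aᶜ

/-- `FunClass Z true α A` : `A` is of the functionally additive class `α` in `Z`;
`FunClass Z false α A` : `A` is of the functionally multiplicative class `α` in `Z`. -/
inductive FunClass (Z : Type*) [TopologicalSpace Z] : Bool → Ordinal.{0} → Set Z → Prop
  | open_ (A : Set Z) (h : FunctionallyOpen A) : FunClass Z true 0 A
  | closed_ (A : Set Z) (h : FunctionallyClosed A) : FunClass Z false 0 A
  | union (α : Ordinal.{0}) (A : ℕ → Set Z) (β : ℕ → Ordinal.{0}) (hα : α ≠ 0)
      (hβ : ∀ n, β n < α) (h : ∀ n, FunClass Z false (β n) (A n)) :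
      FunClass Z true α (⋃ n, A n)
  | inter (α : Ordinal.{0}) (A : ℕ → Set Z) (β : ℕ → Ordinal.{0}) (hα : α ≠ 0)
      (hβ : ∀ n, β n < α) (h : ∀ n, FunClass Z true (β n) (A n)) :
      FunClass Z false α (⋂ n, A n)

/-- `A` is α-embedded in `Z` if every subset of `A` of functionally multiplicative class `α`
in the subspace `A` is the trace on `A` of a set of functionally multiplicative class `α` in `Z`. -/
def IsAlphaEmbedded {Z : Type*} [TopologicalSpace Z] (α : Ordinal.{0}) (A : Set Z) : Prop :=
  ∀ B : Set Z, B ⊆ A → FunClass ↥A false α (Subtype.val ⁻¹' B) →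
    ∃ C : Set Z, FunClass Z false α C ∧ C ∩ A = B

/-- `Z` is α-universal if every subset of `Z` is α-embedded in `Z`. -/
def AlphaUniversal (Z : Type*) [TopologicalSpace Z] (α : Ordinal.{0}) : Prop :=
  ∀ A : Set Z, IsAlphaEmbedded α A

/-- The projection of the product `∀ t, X t` onto the coordinates in `S`. -/
def proj {T : Type*} {X : T → Type*} (S : Set T) (x : ∀ t, X t) : ∀ t : S, X t.1 :=
  fun t => x t.1

/-- A functionally measurable (Baire) set: a member of some functionally additive or
multiplicative class `α` with `α < ω₁`. -/
def FunctionallyMeasurable {Z : Type*} [TopologicalSpace Z] (A : Set Z) : Prop :=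
  ∃ (b : Bool) (β : Ordinal.{0}), β < (Cardinal.aleph 1).ord ∧ FunClass Z b β A

/-- `Y` has a regular `Gδ`-diagonal. -/
def RegularGDeltaDiagonal (Y : Type*) [TopologicalSpace Y] : Prop :=
  ∃ G : ℕ → Set (Y × Y), (∀ n, IsOpen (G n)) ∧
    {p : Y × Y | p.1 = p.2} = ⋂ n, G n ∧
    {p : Y × Y | p.1 = p.2} = ⋂ n, closure (G n)

/-- An indexed form of pseudo-ℵ₁-compactness: repetitions are harmless, since a nonempty set
occurs only finitely often in a locally finite family. -/
theorem PseudoAleph1Compact.countable_index {Z ι : Type*} [TopologicalSpace Z]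
    (hZ : PseudoAleph1Compact Z) (W : ι → Set Z) (ho : ∀ i, IsOpen (W i))
    (hne : ∀ i, (W i).Nonempty) (hW : LocallyFinite W) : (univ : Set ι).Countable := by
  have hr : (range W).Countable := by
    apply hZ
    · rintro _ ⟨i, rfl⟩; exact ho i
    · rintro _ ⟨i, rfl⟩; exact hne i
    · choose g hg using fun U : range W => U.2
      have hinj : Function.Injective g := fun U V h => by
        apply Subtype.ext
        rw [← hg U, ← hg V, h]
      have := hW.comp_injective hinj
      have e : (W ∘ g) = fun U : range W => (U : Set Z) := funext hg
      rwa [e] at this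
  have hu : (univ : Set ι) = ⋃ U ∈ range W, {i | W i = U} := by
    ext i; simp
  rw [hu]
  refine hr.biUnion ?_
  rintro _ ⟨j, rfl⟩
  obtain ⟨z, hz⟩ := hne j
  refine ((hW.point_finite z).subset ?_).countable
  intro i hi
  have hij : W i = W j := hi
  exact hij.superset hz

open Classical in
/-- The self-map of `E` that replaces the `t`-th coordinate by `a t`. -/
noncomputable def resetCoord {T : Type*} {X : T → Type*} {a : ∀ t, X t} {E : Set (∀ t, X t)}
    (h : ∀ x ∈ E, ∀ t, Function.update x t (a t) ∈ E) (t : T) (x : E) : E :=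
  ⟨Function.update x.1 t (a t), h x.1 x.2 t⟩

open Classical in
theorem continuous_resetCoord {T : Type*} {X : T → Type*} [∀ t, TopologicalSpace (X t)]
    {a : ∀ t, X t} {E : Set (∀ t, X t)}
    (h : ∀ x ∈ E, ∀ t, Function.update x t (a t) ∈ E) (t : T) :
    Continuous (resetCoord h t) := by
  exact (continuous_subtype_val.update t continuous_const).subtype_mk _

open Classical in
/-- A neighbourhood of a point on which all pairs of values lie in `G` meets only those sets
whose index is one of the finitely many coordinates it restricts. -/
theorem locallyFinite_reset {T : Type*} {X : T → Type*} [∀ t, TopologicalSpace (X t)]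
    {Y : Type*} [TopologicalSpace Y] {a : ∀ t, X t} {E : Set (∀ t, X t)}
    (h : ∀ x ∈ E, ∀ t, Function.update x t (a t) ∈ E)
    {f : E → Y} (hf : Continuous f) {G : Set (Y × Y)} (hG : IsOpen G) (hd : ∀ y, (y, y) ∈ G) :
    LocallyFinite fun t : T => {x : E | (f x, f (resetCoord h t x)) ∉ closure G} := by
  intro x
  obtain ⟨A, hA, B, hB, hAB⟩ := mem_nhds_prod_iff.mp (hG.mem_nhds (hd (f x)))
  have hO : f ⁻¹' (A ∩ B) ∈ 𝓝 x := hf.continuousAt (Filter.inter_mem hA hB)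
  obtain ⟨V, hV, hVO⟩ := mem_nhds_subtype E x _ |>.mp hO
  rw [nhds_pi, Filter.mem_pi] at hV
  obtain ⟨I, hI, s, hs, hsV⟩ := hV
  refine ⟨Subtype.val ⁻¹' (I.pi s), ?_, hI.subset ?_⟩
  · exact continuous_subtype_val.continuousAt (set_pi_mem_nhds hI fun t _ => hs t)
  · rintro t ⟨u, hu, huI⟩
    by_contra ht
    have hu' : (resetCoord h t u).1 ∈ I.pi s := by
      intro i hi
      have : i ≠ t := fun e => ht (e ▸ hi)
      simpa [resetCoord, this] using huI i hi
    exact hu (subset_closure (hAB ⟨(hVO (hsV huI)).1, (hVO (hsV hu')).2⟩))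

open Classical in
/-- If resetting any single coordinate outside `T₀` never changes `f`, then neither does
resetting all of them at once. -/
theorem eq_of_reset_compl {T : Type*} {X : T → Type*} [∀ t, TopologicalSpace (X t)]
    {Y : Type*} [TopologicalSpace Y] [T2Space Y] {a : ∀ t, X t} {E : Set (∀ t, X t)}
    (h : ∀ x ∈ E, ∀ t, Function.update x t (a t) ∈ E)
    {f : E → Y} (hf : Continuous f) {T₀ : Set T}
    (hT₀ : ∀ t ∉ T₀, ∀ x, f (resetCoord h t x) = f x) (x : E)
    (hx : T₀.piecewise x.1 a ∈ E) : f ⟨T₀.piecewise x.1 a, hx⟩ = f x := by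
  -- reset the coordinates lying in a finite set `F` but not in `T₀`
  let z : Finset T → ∀ t, X t := fun F t => if t ∈ F ∧ t ∉ T₀ then a t else x.1 t
  have hz : ∀ F, ∃ hF : z F ∈ E, f ⟨z F, hF⟩ = f x := by
    intro F
    induction F using Finset.induction_on with
    | empty =>
      have : z ∅ = x.1 := by funext t; simp [z]
      exact ⟨this ▸ x.2, congrArg f (Subtype.ext this)⟩
    | insert s F hs ih =>
      obtain ⟨hF, hfF⟩ := ih
      by_cases hsT : s ∈ T₀
      · have : z (insert s F) = z F := by
          funext t
          by_cases hts : t = s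
          · subst hts; simp [z, hsT]
          · simp [z, hts]
        exact ⟨this ▸ hF, by rw [← hfF]; congr 1; exact Subtype.ext this⟩
      · have : z (insert s F) = (resetCoord h s ⟨z F, hF⟩).1 := by
          funext t
          by_cases hts : t = s
          · subst hts; simp [z, hsT, resetCoord]
          · simp [z, hts, resetCoord]
        refine ⟨this ▸ Subtype.property _, ?_⟩
        rw [← hfF, ← hT₀ s hsT ⟨z F, hF⟩]
        congr 1; exact Subtype.ext this
  choose hzE hzf using hz
  have hlim : Filter.Tendsto (fun F => (⟨z F, hzE F⟩ : E)) Filter.atTop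
      (𝓝 ⟨T₀.piecewise x.1 a, hx⟩) := by
    rw [tendsto_subtype_rng, tendsto_pi_nhds]
    intro t
    refine tendsto_const_nhds.congr' ?_
    filter_upwards [Filter.eventually_ge_atTop {t}] with F hF
    have : t ∈ F := hF (Finset.mem_singleton_self t)
    by_cases ht : t ∈ T₀ <;> simp [z, ht, this]
  have h1 := (hf.tendsto _).comp hlim
  have h2 : f ∘ (fun F => (⟨z F, hzE F⟩ : E)) = fun _ => f x := funext hzf
  rw [h2] at h1
  exact tendsto_nhds_unique h1 tendsto_const_nhds

/-- every continuous map from a pseudo-ℵ₁-compact, (ℵ₁,ℵ₀)-invariant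
subspace of a product into a space with a regular Gδ-diagonal factors continuously
through the projection onto countably many coordinates; in particular it depends on
countably many coordinates. -/
theorem statement3 {T : Type u} {X : T → Type v} [∀ t, TopologicalSpace (X t)]
    [∀ t, Nonempty (X t)] {Y : Type w} [TopologicalSpace Y]
    (hY : RegularGDeltaDiagonal Y)
    (a : ∀ t, X t) (E : Set (∀ t, X t))
    (hinv : ∀ x ∈ E, ∀ S : Set T, (S.Countable ∨ Sᶜ.Finite) →
      ∀ z : ∀ t, X t, (∀ t ∈ S, z t = x t) → (∀ t ∉ S, z t = a t) → z ∈ E)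
    (hE : PseudoAleph1Compact ↥E)
    (f : ↥E → Y) (hf : Continuous f) :
    ∃ T₀ : Set T, T₀.Countable ∧
      (∃ f₀ : ↥(proj T₀ '' E) → Y, Continuous f₀ ∧
        ∀ x : ↥E, f x = f₀ ⟨proj T₀ x.1, ⟨x.1, x.2, rfl⟩⟩) ∧
      (∀ x y : ↥E, proj T₀ x.1 = proj T₀ y.1 → f x = f y) := by
  classical
  obtain ⟨G, hGo, hG, hGc⟩ := hY
  have hd : ∀ n y, (y, y) ∈ G n := fun n y =>
    mem_iInter.mp (hG.subset (show (y, y) ∈ {p : Y × Y | p.1 = p.2} from rfl)) n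
  have : T2Space Y := by
    rw [t2_iff_isClosed_diagonal]
    have : diagonal Y = ⋂ n, closure (G n) := hGc
    rw [this]
    exact isClosed_iInter fun n => isClosed_closure
  have h : ∀ x ∈ E, ∀ t, Function.update x t (a t) ∈ E := by
    intro x hx t
    refine hinv x hx {t}ᶜ (Or.inr (by simp)) _ ?_ ?_
    · intro s hs
      exact Function.update_of_ne hs _ _
    · intro s hs
      obtain rfl : s = t := by simpa using hs
      simp
  let W : ℕ → T → Set E := fun n t => {x | (f x, f (resetCoord h t x)) ∉ closure (G n)}
  let T₀ : Set T := ⋃ n, {t | (W n t).Nonempty}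
  have hcount : T₀.Countable := by
    refine countable_iUnion fun n => ?_
    have hlf : LocallyFinite (W n) := locallyFinite_reset h hf (hGo n) (hd n)
    have := hE.countable_index (fun t : {t | (W n t).Nonempty} => W n t)
      (fun t => isClosed_closure.isOpen_compl.preimage
        (hf.prodMk (hf.comp (continuous_resetCoord h t.1))))
      (fun t => t.2) (hlf.comp_injective Subtype.val_injective)
    exact countable_coe_iff.mp (countable_univ_iff.mp this)
  have hT₀ : ∀ t ∉ T₀, ∀ x, f (resetCoord h t x) = f x := by
    intro t ht x
    by_contra hne
    have hp : (f x, f (resetCoord h t x)) ∉ ⋂ n, closure (G n) := by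
      rw [← hGc]; exact fun e => hne e.symm
    simp only [mem_iInter, not_forall] at hp
    obtain ⟨n, hn⟩ := hp
    exact ht (mem_iUnion.mpr ⟨n, x, hn⟩)
  have hpw : ∀ x ∈ E, T₀.piecewise x a ∈ E := fun x hx =>
    hinv x hx T₀ (Or.inl hcount) _ (fun t ht => by simp [ht]) (fun t ht => by simp [ht])
  have hfx : ∀ x : E, f ⟨T₀.piecewise x.1 a, hpw x.1 x.2⟩ = f x := fun x =>
    eq_of_reset_compl h hf hT₀ x _
  -- extension by `a` of points of the countable subproduct
  let ext : (∀ t : T₀, X t.1) → ∀ t, X t := fun z t => if ht : t ∈ T₀ then z ⟨t, ht⟩ else a t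
  have hext : ∀ x, ext (proj T₀ x) = T₀.piecewise x a := by
    intro x; funext t
    by_cases ht : t ∈ T₀ <;> simp [ext, proj, ht]
  have hextc : Continuous ext := by
    refine continuous_pi fun t => ?_
    by_cases ht : t ∈ T₀
    · simpa [ext, ht] using continuous_apply (⟨t, ht⟩ : T₀)
    · simpa [ext, ht] using continuous_const
  have hextE : ∀ z : ↥(proj T₀ '' E), ext z.1 ∈ E := by
    rintro ⟨_, x, hx, rfl⟩
    rw [hext]; exact hpw x hx
  have hfac : ∀ x : ↥E, f x = f ⟨ext (proj T₀ x.1), hextE ⟨_, x.1, x.2, rfl⟩⟩ := by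
    intro x
    exact (hfx x).symm.trans (congrArg f (Subtype.ext (hext x.1).symm))
  refine ⟨T₀, hcount, ⟨fun z => f ⟨ext z.1, hextE z⟩, ?_, hfac⟩, ?_⟩
  · exact hf.comp ((hextc.comp continuous_subtype_val).subtype_mk _)
  · intro x y hxy
    simp only [hfac x, hfac y, hxy]
end

section
/- Let 0 ≤ α < ω₁, let (X_t)_{t∈T} be a family of nonempty topological spaces such that for every at most countable set T₀ ⊆ T the product ∏_{t∈T₀} X_t is α-universal, let X = ∏_{t∈T} X_t, and let E ⊆ X be a set such that for every continuous function f : E → ℝ there exist an at most countable set T₀ ⊆ T and a continuous mapping f₀ : p_{T₀}(E) → ℝ with f = f₀ ∘ (p_{T₀}|_E). Then E is α-embedded in X. -/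
/-!
A set of functional class `α` in `E` is built by countably many operations from zero sets of
continuous functions on `E`. Each such function factors through countably many coordinates, so by
induction on the class the whole set is the preimage of a set `B₀` of the same class in
`proj S '' E` for one countable `S` (`FunClass.exists_factor`). At each countable union or intersection the countable
coordinate sets are merged by pulling back along the forgetful maps (`exists_common_factor`).

Since the countable product over `S` is `α`-universal, `B₀` is the trace on `proj S '' E` of a set
`C` of multiplicative class `α` in that product, and `proj S ⁻¹' C` is the required set, because
functional classes are preserved by continuous preimages (`FunClass.preimage`).
-/

open Set Topology

theorem FunClass.preimage {Y Z : Type*} [TopologicalSpace Y] [TopologicalSpace Z] {g : Y → Z}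
    (hg : Continuous g) {b : Bool} {α : Ordinal.{0}} {A : Set Z} (h : FunClass Z b α A) :
    FunClass Y b α (g ⁻¹' A) := by
  induction h with
  | open_ A h =>
    obtain ⟨f, hf, hA⟩ := h
    exact .open_ _ ⟨f ∘ g, hf.comp hg, by rw [← Set.preimage_compl, hA]; rfl⟩
  | closed_ A h =>
    obtain ⟨f, hf, hA⟩ := h
    exact .closed_ _ ⟨f ∘ g, hf.comp hg, by rw [hA]; rfl⟩
  | union α A β hα hβ _ ih =>
    rw [Set.preimage_iUnion]
    exact .union α _ β hα hβ ih
  | inter α A β hα hβ _ ih =>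
    rw [Set.preimage_iInter]
    exact .inter α _ β hα hβ ih

theorem continuous_proj {T : Type*} {X : T → Type*} [∀ t, TopologicalSpace (X t)] (S : Set T) :
    Continuous (proj S : (∀ t, X t) → ∀ t : S, X t.1) :=
  continuous_pi fun t => continuous_apply t.1

/-- The projection onto the coordinates in `S`, as a map from `E` onto its image. -/
def projRestrict {T : Type*} {X : T → Type*} (S : Set T) (E : Set (∀ t, X t)) (x : E) :
    ↥(proj S '' E) :=
  ⟨proj S x.1, x.1, x.2, rfl⟩

/-- For `S ⊆ S'`, forgetting the coordinates outside `S` maps the `S'`-projection of `E`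
continuously to its `S`-projection, compatibly with the projections from `E`. -/
theorem exists_forget {T : Type*} {X : T → Type*} [∀ t, TopologicalSpace (X t)]
    {S S' : Set T} (h : S ⊆ S') (E : Set (∀ t, X t)) :
    ∃ q : ↥(proj S' '' E) → ↥(proj S '' E), Continuous q ∧
      ∀ x : E, q (projRestrict S' E x) = projRestrict S E x := by
  refine ⟨fun y => ⟨fun t => y.1 ⟨t.1, h t.2⟩, ?_⟩, ?_, fun x => rfl⟩
  · obtain ⟨_, x, hx, rfl⟩ := y
    exact ⟨x, hx, rfl⟩
  · exact Continuous.subtype_mk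
      (continuous_pi fun t =>
        (continuous_apply (⟨t.1, h t.2⟩ : S')).comp continuous_subtype_val) _

/-- If sets `A n` of `E` each depend on countably many coordinates through sets of class
`(b, β n)`, then the coordinates can be chosen independently of `n`. -/
theorem exists_common_factor {T : Type*} {X : T → Type*} [∀ t, TopologicalSpace (X t)]
    {E : Set (∀ t, X t)} {b : Bool} {β : ℕ → Ordinal.{0}} {A : ℕ → Set E}
    (h : ∀ n, ∃ S : Set T, S.Countable ∧ ∃ B : Set ↥(proj S '' E),
      FunClass _ b (β n) B ∧ A n = projRestrict S E ⁻¹' B) :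
    ∃ S : Set T, S.Countable ∧ ∃ B : ℕ → Set ↥(proj S '' E),
      ∀ n, FunClass _ b (β n) (B n) ∧ A n = projRestrict S E ⁻¹' B n := by
  choose S hS B hB hAB using h
  choose q hq hqp using fun n => exists_forget (Set.subset_iUnion S n) E
  refine ⟨⋃ n, S n, Set.countable_iUnion hS, fun n => q n ⁻¹' B n,
    fun n => ⟨(hB n).preimage (hq n), ?_⟩⟩
  ext x
  rw [hAB n, Set.mem_preimage, Set.mem_preimage, Set.mem_preimage, hqp]

/-- If continuous real functions on `E` factor through countable projections, then every set of
a functional class in `E` is the preimage of a set of the same class in some countable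
projection of `E`. -/
theorem FunClass.exists_factor {T : Type*} {X : T → Type*} [∀ t, TopologicalSpace (X t)]
    {E : Set (∀ t, X t)}
    (hfac : ∀ f : ↥E → ℝ, Continuous f →
      ∃ T₀ : Set T, T₀.Countable ∧
        ∃ f₀ : ↥(proj T₀ '' E) → ℝ, Continuous f₀ ∧
          ∀ x : ↥E, f x = f₀ ⟨proj T₀ x.1, ⟨x.1, x.2, rfl⟩⟩)
    {b : Bool} {α : Ordinal.{0}} {A : Set E} (h : FunClass E b α A) :
    ∃ S : Set T, S.Countable ∧ ∃ B : Set ↥(proj S '' E),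
      FunClass _ b α B ∧ A = projRestrict S E ⁻¹' B := by
  induction h with
  | open_ A h =>
    obtain ⟨f, hf, hA⟩ := h
    obtain ⟨S, hS, f₀, hf₀, hff₀⟩ := hfac f hf
    refine ⟨S, hS, (f₀ ⁻¹' {0})ᶜ, .open_ _ ⟨f₀, hf₀, compl_compl _⟩, ?_⟩
    rw [← compl_compl A, hA]
    ext x
    exact not_congr (by rw [Set.mem_preimage, hff₀]; rfl)
  | closed_ A h =>
    obtain ⟨f, hf, hA⟩ := h
    obtain ⟨S, hS, f₀, hf₀, hff₀⟩ := hfac f hf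
    refine ⟨S, hS, f₀ ⁻¹' {0}, .closed_ _ ⟨f₀, hf₀, rfl⟩, ?_⟩
    rw [hA]
    ext x
    rw [Set.mem_preimage, hff₀]
    rfl
  | union α A β hα hβ _ ih =>
    obtain ⟨S, hS, B, hB⟩ := exists_common_factor ih
    refine ⟨S, hS, ⋃ n, B n, .union α B β hα hβ fun n => (hB n).1, ?_⟩
    rw [Set.preimage_iUnion]
    exact Set.iUnion_congr fun n => (hB n).2
  | inter α A β hα hβ _ ih =>
    obtain ⟨S, hS, B, hB⟩ := exists_common_factor ih
    refine ⟨S, hS, ⋂ n, B n, .inter α B β hα hβ fun n => (hB n).1, ?_⟩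
    rw [Set.preimage_iInter]
    exact Set.iInter_congr fun n => (hB n).2

/-- if every at most countable subproduct of `∏ t, X t` is α-universal and
every continuous real function on `E` factors continuously through a projection onto
countably many coordinates, then `E` is α-embedded in the product. -/
theorem statement9 {T : Type u} {X : T → Type v} [∀ t, TopologicalSpace (X t)]
    [∀ t, Nonempty (X t)]
    (α : Ordinal.{0}) (hα : α < (Cardinal.aleph 1).ord)
    (huniv : ∀ T₀ : Set T, T₀.Countable → AlphaUniversal (∀ t : T₀, X t.1) α)
    (E : Set (∀ t, X t))
    (hfac : ∀ f : ↥E → ℝ, Continuous f →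
      ∃ T₀ : Set T, T₀.Countable ∧
        ∃ f₀ : ↥(proj T₀ '' E) → ℝ, Continuous f₀ ∧
          ∀ x : ↥E, f x = f₀ ⟨proj T₀ x.1, ⟨x.1, x.2, rfl⟩⟩) :
    IsAlphaEmbedded α E := by
  intro B hBE hB
  obtain ⟨S, hS, B₀, hB₀, hBB₀⟩ := hB.exists_factor hfac
  have hpre : Subtype.val ⁻¹' (Subtype.val '' B₀ : Set (∀ t : S, X t.1)) = B₀ :=
    Set.preimage_image_eq _ Subtype.val_injective
  obtain ⟨C, hC, hCB⟩ := huniv S hS (proj S '' E) (Subtype.val '' B₀)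
    (by rintro _ ⟨y, -, rfl⟩; exact y.2) (by rw [hpre]; exact hB₀)
  refine ⟨proj S ⁻¹' C, hC.preimage (continuous_proj S), ?_⟩
  ext x
  -- On `E`, membership in `B` is decided by the projection lying in `B₀`, hence in `C`.
  have key : ∀ hx : x ∈ E, x ∈ B ↔ proj S x ∈ C := by
    intro hx
    have h1 : x ∈ B ↔ projRestrict S E ⟨x, hx⟩ ∈ B₀ := Set.ext_iff.mp hBB₀ ⟨x, hx⟩
    have h2 : proj S x ∈ C ∩ proj S '' E ↔ projRestrict S E ⟨x, hx⟩ ∈ B₀ := by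
      rw [hCB]
      exact Set.ext_iff.mp hpre (projRestrict S E ⟨x, hx⟩)
    rw [h1, ← h2]
    exact ⟨fun h => h.1, fun h => ⟨h, x, hx, rfl⟩⟩
  exact ⟨fun h => (key h.2).2 h.1, fun h => ⟨(key (hBE h)).1 h, hBE h⟩⟩
end

section
/- Let Y = ∏_{t∈(0,1]} X_t where X_t = ℕ with the discrete topology for every t ∈ (0,1], and for i ∈ {1,2} let F_i = {y = (y_t)_{t∈(0,1]} ∈ Y : for every n ∈ ℕ with n ≠ i, the set {t ∈ (0,1] : y_t = n} has at most one element}. Then for each i ∈ {1,2} the subspace F_i of Y is pseudo-ℵ₁-compact. -/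
/-!
Fix `i` and call the set of coordinates where `z ≠ i` the support of `z`.
Changing a point of `Fset i` to the value `i` outside a finite set of coordinates keeps it in
`Fset i`, so every nonempty open subset of `Fset i` contains a point of finite support.
The key fact (`exists_accumulation`) is that an uncountable family of points of `Yprod` whose
supports have bounded finite size has an accumulation point: a point each neighbourhood of which
contains infinitely many members of the family, counted by index. Choosing a finitely supported
point in each member of an uncountable family of nonempty open sets, and restricting to an
uncountable subfamily with supports of bounded size, one obtains an accumulation point, which lies
in `Fset i` because `Fset i` is closed, and at which the family is not locally finite.
-/

open Set Topology

/-- The natural numbers `{1, 2, 3, ...}` with the discrete topology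
(as a subspace of the discrete space `ℕ`). -/
abbrev PosNat : Type := {n : ℕ // 0 < n}

/-- The product `Y = ℕ^{(0,1]}` where `ℕ = {1,2,...}` is discrete. -/
abbrev Yprod : Type := ↥(Set.Ioc (0 : ℝ) 1) → PosNat

/-- Stone's set `F i = {y ∈ Y : |{t : y t = n}| ≤ 1 for every n ≠ i}`. -/
def Fset (i : PosNat) : Set Yprod :=
  {y | ∀ n : PosNat, n ≠ i → {t : ↥(Set.Ioc (0 : ℝ) 1) | y t = n}.Subsingleton}

/-- The product `X = [0,1] × ℕ^{(0,1]}`. -/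
abbrev Xprod : Type := ↥(Set.Icc (0 : ℝ) 1) × Yprod

/-- A family of points indexed by an uncountable set, with supports of size at most `k`, has an
accumulation point. Induction on `k`: if the constant point `i` is not an accumulation point, then
uncountably many members take one common value `n ≠ i` at one common coordinate `t`; resetting that
coordinate to `i` shrinks the supports, and setting it back to `n` is continuous. -/
lemma exists_accumulation {ι : Type*} (i : PosNat) (k : ℕ) :
    ∀ (A : Set ι) (z : ι → Yprod), ¬ A.Countable →
      (∀ a ∈ A, ∃ I : Finset ↥(Set.Ioc (0 : ℝ) 1), I.card ≤ k ∧ ∀ t, z a t ≠ i → t ∈ I) →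
      ∃ y : Yprod, ∀ V ∈ 𝓝 y, {a ∈ A | z a ∈ V}.Infinite := by
  classical
  induction k with
  | zero =>
    intro A z hA hz
    refine ⟨fun _ => i, fun V hV => ?_⟩
    have : {a ∈ A | z a ∈ V} = A := by
      refine Set.Subset.antisymm (fun a ha => ha.1) (fun a ha => ⟨ha, ?_⟩)
      obtain ⟨I, hI, h⟩ := hz a ha
      have hI0 : I = ∅ := by simpa using hI
      have : z a = fun _ => i := by
        funext t
        by_contra ht
        simpa [hI0] using h t ht
      rw [this]
      exact mem_of_mem_nhds hV
    rw [this]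
    exact fun hf => hA hf.countable
  | succ k ih =>
    intro A z hA hz
    by_cases hc : ∀ V ∈ 𝓝 (fun _ => i : Yprod), {a ∈ A | z a ∈ V}.Infinite
    · exact ⟨_, hc⟩
    push Not at hc
    obtain ⟨V, hV, hfin⟩ := hc
    obtain ⟨W, hWV, hWo, hiW⟩ := mem_nhds_iff.1 hV
    obtain ⟨S, u, hu, hS⟩ := isOpen_pi_iff.1 hWo _ hiW
    obtain ⟨t, n, hn, hB⟩ : ∃ t n, n ≠ i ∧ ¬ {a ∈ A | z a t = n}.Countable := by
      by_contra! hcon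
      apply hA
      have hcount : (⋃ t ∈ S, ⋃ n : {n : PosNat // n ≠ i}, {a ∈ A | z a t = n.1}).Countable :=
        S.countable_toSet.biUnion fun t _ => Set.countable_iUnion fun n => hcon t n.1 n.2
      refine (hfin.countable.union hcount).mono fun a ha => ?_
      by_cases hav : z a ∈ V
      · exact Or.inl ⟨ha, hav⟩
      · right
        have : ∃ t ∈ S, z a t ≠ i := by
          by_contra! hcon2
          refine hav (hWV (hS fun t ht => ?_))
          rw [hcon2 t ht]
          exact (hu t ht).2
        obtain ⟨t, ht, hne⟩ := this
        simp only [Set.mem_iUnion]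
        exact ⟨t, ht, ⟨z a t, hne⟩, ha, rfl⟩
    obtain ⟨y, hy⟩ := ih {a ∈ A | z a t = n} (fun a => Function.update (z a) t i) hB (by
      rintro a ⟨ha, hat⟩
      obtain ⟨I, hI, h⟩ := hz a ha
      have htI : t ∈ I := h t (hat ▸ hn)
      refine ⟨I.erase t, ?_, fun s hs => ?_⟩
      · rw [Finset.card_erase_of_mem htI]
        omega
      · by_cases hst : s = t
        · subst hst
          simp at hs
        · rw [Function.update_of_ne hst] at hs
          exact Finset.mem_erase.2 ⟨hst, h s hs⟩)
    refine ⟨Function.update y t n, fun V' hV' => ?_⟩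
    have hcont : Continuous fun w : Yprod => Function.update w t n :=
      continuous_id.update t continuous_const
    refine (hy _ (hcont.continuousAt.preimage_mem_nhds hV')).mono ?_
    rintro a ⟨⟨ha, hat⟩, hmem⟩
    refine ⟨ha, ?_⟩
    -- Restoring the value `n` at `t` recovers `z a`.
    have : Function.update (Function.update (z a) t i) t n = z a := by
      rw [Function.update_idem, ← hat, Function.update_eq_self]
    simpa [this] using hmem

lemma exists_finite_support_mem (i : PosNat) (U : Set ↥(Fset i)) (hU : IsOpen U)
    (hne : U.Nonempty) :
    ∃ z : ↥(Fset i), z ∈ U ∧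
      ∃ I : Finset ↥(Set.Ioc (0 : ℝ) 1), ∀ t, z.1 t ≠ i → t ∈ I := by
  classical
  obtain ⟨x, hx⟩ := hne
  obtain ⟨V, hV, rfl⟩ := isOpen_induced_iff.1 hU
  obtain ⟨I, u, hu, hI⟩ := isOpen_pi_iff.1 hV _ hx
  refine ⟨⟨fun t => if t ∈ I then x.1 t else i, ?_⟩, ?_, I, ?_⟩
  · intro n hn t ht s hs
    simp only [Set.mem_ofPred_eq] at ht hs
    split_ifs at ht hs with h1 h2
    · exact x.2 n hn ht hs
    · exact absurd hs.symm hn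
    · exact absurd ht.symm hn
    · exact absurd ht.symm hn
  · refine hI fun t ht => ?_
    have ht' : t ∈ I := ht
    simpa [ht'] using (hu t ht).2
  · intro t ht
    by_contra h
    simp [h] at ht

lemma isClosed_Fset (i : PosNat) : IsClosed (Fset i) := by
  rw [← closure_subset_iff_isClosed]
  intro y hy n hn t ht s hs
  have ho (r : ↥(Set.Ioc (0 : ℝ) 1)) : IsOpen ((fun w : Yprod => w r) ⁻¹' {n}) :=
    (isOpen_discrete {n}).preimage (continuous_apply r)
  obtain ⟨w, ⟨hwt, hws⟩, hw⟩ := mem_closure_iff.1 hy _ ((ho t).inter (ho s)) ⟨ht, hs⟩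
  exact hw n hn hwt hws

/-- for each `i ∈ {1,2}` the subspace `F i` of `Y` is pseudo-ℵ₁-compact. -/
theorem statement14 (i : PosNat) (hi : i = ⟨1, one_pos⟩ ∨ i = ⟨2, two_pos⟩) :
    PseudoAleph1Compact ↥(Fset i) := by
  intro 𝒰 hopen hne hlf
  by_contra hunc
  choose z hzU I hI using fun U : 𝒰 => exists_finite_support_mem i U.1 (hopen U.1 U.2) (hne U.1 U.2)
  obtain ⟨k, hk⟩ : ∃ k : ℕ, ¬ {U : 𝒰 | (I U).card ≤ k}.Countable := by
    by_contra! hcon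
    apply hunc
    have h := Set.countable_iUnion hcon
    rw [Set.iUnion_eq_univ_iff.2 fun U => ⟨(I U).card, by simp⟩] at h
    exact Set.countable_coe_iff.1 (Set.countable_univ_iff.1 h)
  obtain ⟨y, hy⟩ := exists_accumulation i k _ (fun U => (z U).1) hk
    fun U hU => ⟨I U, hU, hI U⟩
  have hyF : y ∈ Fset i := by
    rw [← (isClosed_Fset i).closure_eq, mem_closure_iff_nhds]
    intro V hV
    obtain ⟨U, -, hU⟩ := (hy V hV).nonempty
    exact ⟨_, hU, (z U).2⟩
  obtain ⟨V, hV, hfin⟩ := hlf ⟨y, hyF⟩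
  obtain ⟨V', hV', hsub⟩ := mem_nhds_subtype _ _ _ |>.1 hV
  refine hy V' hV' (hfin.subset ?_)
  rintro U ⟨-, hU⟩
  exact ⟨z U, hzU U, hsub hU⟩
end
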